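/- Define the utility function u(X,S) = q_count(X,k,r,S) / min(N, k·K_{|S|} + 1) for a nonempty subspace S ⊆ {1,…,d}, where K_c is the kissing number of ℝ^c. Then the sensitivity of u is at most 1: for every nonempty S ⊆ {1,…,d} and all databases X, X' of size N in ℝ^d with H(X,X') = 1, |u(X,S) − u(X',S)| ≤ 1. -/

import Mathlib

open Finset
open scoped Classical

noncomputable section

/-- A point of `ℝ^d`. -/
abbrev Pt (d : ℕ) := EuclideanSpace ℝ (Fin d)

/-- Hamming distance between two databases of size `N`: the number of differing records. -/
def hamming {N d : ℕ} (X X' : Fin N → Pt d) : ℕ :=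
  (univ.filter fun i => X i ≠ X' i).card

/-- The subspace distance `dist_S(x,y) = sqrt( (∑_{i∈S} (x_i − y_i)²) / |S| )`. -/
def sdist {d : ℕ} (S : Finset (Fin d)) (x y : Pt d) : ℝ :=
  Real.sqrt ((∑ i ∈ S, (x i - y i) ^ 2) / S.card)

/-- The degree of record `i` in `X` in subspace `S`: the number of other records within
subspace distance `r`. -/
def sdeg {N d : ℕ} (S : Finset (Fin d)) (X : Fin N → Pt d) (r : ℝ) (i : Fin N) : ℕ :=
  (univ.filter fun j => j ≠ i ∧ sdist S (X j) (X i) ≤ r).card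

/-- `q_count(X,k,r,S)`: the number of outlier records in subspace `S`. -/
def qCountS {N d : ℕ} (X : Fin N → Pt d) (k : ℕ) (r : ℝ) (S : Finset (Fin d)) : ℕ :=
  (univ.filter fun i => sdeg S X r i < k).card

/-- `K` is the kissing number of `ℝ^c`: the largest `n` for which there exist `n` unit
vectors with pairwise distances at least `1`. -/
def IsKissingNumber (c K : ℕ) : Prop :=
  IsGreatest {n : ℕ | ∃ y : Fin n → Pt c,
    (∀ i, ‖y i‖ = 1) ∧ ∀ i j, i ≠ j → 1 ≤ ‖y i - y j‖} K

/-- The utility function `u(X,S) = q_count(X,k,r,S) / min(N, k·K_c + 1)` for the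
exponential mechanism, where `K_c` is the kissing number of `ℝ^{|S|}`. -/
def uSubspace {N d : ℕ} (k : ℕ) (r : ℝ) (Kc : ℕ) (X : Fin N → Pt d)
    (S : Finset (Fin d)) : ℝ :=
  (qCountS X k r S : ℝ) / ((min N (k * Kc + 1) : ℕ) : ℝ)

/-!
Call two records near if their subspace distance is at most `r`. If a record is an outlier of `X`
but not of `X'`, then its entry was changed, or it lost a near record of `X'` whose entry was
changed, so it lies within `r` of the new entry `X' i` for some changed `i`. A fixed point `p` has
at most `k * K` outliers within `r`: each of them is near fewer than `k` others, so a maximal set of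
pairwise non-near ones contains at least a `1 / k` fraction of them, and such a set has at most `K`
elements, because points of a ball of radius `r` more than `r` apart are seen from its centre under
angles of at least `π / 3`. Hence each changed record alters the count by at most `k * K + 1`.
-/

section IndependentSets

variable {V : Type*} (G : SimpleGraph V) (A : Finset V)

theorem exists_isIndepSet_forall_exists_adj :
    ∃ I ⊆ A, G.IsIndepSet (I : Set V) ∧ ∀ b ∈ A, b ∉ I → ∃ a ∈ I, G.Adj a b := by
  let 𝓘 : Finset (Finset V) := {I ∈ A.powerset | G.IsIndepSet (I : Set V)}
  obtain ⟨I, hI⟩ := 𝓘.exists_maximal ⟨∅, by simp [𝓘, SimpleGraph.IsIndepSet]⟩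
  obtain ⟨hIA, hindep⟩ : I ⊆ A ∧ G.IsIndepSet (I : Set V) := by simpa [𝓘] using hI.prop
  refine ⟨I, hIA, hindep, fun b hb hbI => ?_⟩
  by_contra! hnonadj
  have hinsert : G.IsIndepSet (insert b I : Finset V) := by
    rw [coe_insert]
    exact Set.Pairwise.insert hindep fun a ha _ =>
      ⟨fun hba => hnonadj a ha hba.symm, hnonadj a ha⟩
  have hmem : insert b I ∈ 𝓘 := mem_filter.2
    ⟨mem_powerset.2 (insert_subset hb hIA), hinsert⟩
  exact hbI (hI.le_of_ge hmem (subset_insert b I) (mem_insert_self b I))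

theorem exists_isIndepSet_card_le_mul {k : ℕ} (hdeg : ∀ a ∈ A, #{b ∈ A | G.Adj a b} < k) :
    ∃ I ⊆ A, G.IsIndepSet (I : Set V) ∧ #A ≤ #I * k := by
  obtain ⟨I, hIA, hindep, hdom⟩ := exists_isIndepSet_forall_exists_adj G A
  have hcover : A ⊆ I.biUnion fun a => insert a {b ∈ A | G.Adj a b} := by
    intro b hb
    by_cases hbI : b ∈ I
    · exact mem_biUnion.2 ⟨b, hbI, mem_insert_self _ _⟩
    · obtain ⟨a, ha, hab⟩ := hdom b hb hbI
      exact mem_biUnion.2 ⟨a, ha, mem_insert_of_mem (mem_filter.2 ⟨hb, hab⟩)⟩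
  exact ⟨I, hIA, hindep, (card_le_card hcover).trans <| card_biUnion_le_card_mul _ _ _
    fun a ha => (card_insert_le _ _).trans (hdeg a (hIA ha))⟩

end IndependentSets

section KissingNumber

variable {E : Type*} [NormedAddCommGroup E] [InnerProductSpace ℝ E]

-- In the triangle `0, u, v` the side `uv` is longest, so the angle at `0` is at least `π / 3`.
theorem two_mul_inner_le_norm_mul_norm {u v : E} (hu : ‖u‖ ≤ ‖u - v‖) (hv : ‖v‖ ≤ ‖u - v‖) :
    2 * inner ℝ u v ≤ ‖u‖ * ‖v‖ := by
  have hcos := norm_sub_sq_real u v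
  have hle_u : 2 * inner ℝ u v ≤ ‖u‖ ^ 2 := by
    linarith [pow_le_pow_left₀ (norm_nonneg v) hv 2]
  have hle_v : 2 * inner ℝ u v ≤ ‖v‖ ^ 2 := by
    linarith [pow_le_pow_left₀ (norm_nonneg u) hu 2]
  obtain huv | hvu := le_total ‖u‖ ‖v‖
  · exact hle_u.trans (by rw [sq]; gcongr)
  · exact hle_v.trans (by rw [sq]; gcongr)

theorem one_le_norm_normalize_sub_normalize {u v : E} (hu₀ : u ≠ 0) (hv₀ : v ≠ 0)
    (hu : ‖u‖ ≤ ‖u - v‖) (hv : ‖v‖ ≤ ‖u - v‖) :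
    1 ≤ ‖NormedSpace.normalize u - NormedSpace.normalize v‖ := by
  have hcos : 2 * inner ℝ (NormedSpace.normalize u) (NormedSpace.normalize v) ≤ 1 := by
    have hpos : 0 < ‖u‖ * ‖v‖ := mul_pos (norm_pos_iff.2 hu₀) (norm_pos_iff.2 hv₀)
    calc 2 * inner ℝ (NormedSpace.normalize u) (NormedSpace.normalize v)
      _ = 2 * inner ℝ u v / (‖u‖ * ‖v‖) := by
        rw [NormedSpace.normalize, NormedSpace.normalize, real_inner_smul_left,
          real_inner_smul_right]
        field_simp
      _ ≤ 1 := (div_le_one hpos).2 (two_mul_inner_le_norm_mul_norm hu hv)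
  have hsq : ‖NormedSpace.normalize u - NormedSpace.normalize v‖ ^ 2 =
      2 - 2 * inner ℝ (NormedSpace.normalize u) (NormedSpace.normalize v) := by
    rw [norm_sub_sq_real, NormedSpace.norm_normalize hu₀, NormedSpace.norm_normalize hv₀]
    ring
  exact (one_le_sq_iff₀ (norm_nonneg _)).1 (by linarith)

namespace IsKissingNumber

variable {c K : ℕ}

theorem one_le (hc : 1 ≤ c) (hK : IsKissingNumber c K) : 1 ≤ K :=
  hK.2 ⟨fun _ => EuclideanSpace.single ⟨0, hc⟩ 1, by simp,
    fun i j hij => (hij (Subsingleton.elim i j)).elim⟩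

theorem card_le_of_one_le_norm_sub (hK : IsKissingNumber c K) {ι : Type*} {I : Finset ι}
    {y : ι → Pt c} (hy : ∀ i ∈ I, ‖y i‖ = 1)
    (hsep : (I : Set ι).Pairwise fun i j => 1 ≤ ‖y i - y j‖) : #I ≤ K :=
  hK.2 ⟨fun m => y (I.equivFin.symm m), fun m => hy _ (I.equivFin.symm m).2,
    fun _ _ hmn => hsep (I.equivFin.symm _).2 (I.equivFin.symm _).2
      fun h => hmn (I.equivFin.symm.injective (Subtype.ext h))⟩

theorem card_le_of_lt_dist (hc : 1 ≤ c) (hK : IsKissingNumber c K) {ι : Type*} {I : Finset ι}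
    {f : ι → Pt c} {p : Pt c} {r : ℝ} (hball : ∀ i ∈ I, dist (f i) p ≤ r)
    (hsep : (I : Set ι).Pairwise fun i j => r < dist (f i) (f j)) : #I ≤ K := by
  obtain hI | hI := le_or_gt #I 1
  · exact hI.trans (hK.one_le hc)
  have hne : ∀ i ∈ I, f i - p ≠ 0 := by
    intro i hi hip
    obtain ⟨j, hj, hji⟩ := exists_mem_ne hI i
    have hlt : r < dist (f j) p := sub_eq_zero.1 hip ▸ hsep hj hi hji
    exact (hball j hj).not_gt hlt
  refine hK.card_le_of_one_le_norm_sub (y := fun i => NormedSpace.normalize (f i - p))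
    (fun i hi => NormedSpace.norm_normalize (hne i hi)) fun i hi j hj hij => ?_
  have hclose : ∀ l ∈ I, ‖f l - p‖ ≤ ‖f i - p - (f j - p)‖ := by
    intro l hl
    rw [sub_sub_sub_cancel_right, ← dist_eq_norm, ← dist_eq_norm]
    exact (hball l hl).trans (hsep hi hj hij).le
  exact one_le_norm_normalize_sub_normalize (hne i hi) (hne j hj) (hclose i hi) (hclose j hj)

end IsKissingNumber

end KissingNumber

section SubspaceDistance

variable {d : ℕ}

/-- The projection of `ℝ^d` to the coordinates in `S`, enumerated by `Fin S.card` and scaled by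
`1 / √|S|` so that it carries the subspace distance to the Euclidean one. -/
def subspaceProj (S : Finset (Fin d)) (x : Pt d) : Pt #S :=
  WithLp.toLp 2 fun m => x (S.equivFin.symm m) / √(#S : ℝ)

theorem sdist_eq_dist_subspaceProj (S : Finset (Fin d)) (x y : Pt d) :
    sdist S x y = dist (subspaceProj S x) (subspaceProj S y) := by
  rw [sdist, EuclideanSpace.dist_eq]
  congr 1
  simp only [subspaceProj, Real.dist_eq, sq_abs, ← sub_div, div_pow,
    Real.sq_sqrt (Nat.cast_nonneg _)]
  rw [← sum_div, ← sum_coe_sort S, ← Equiv.sum_comp S.equivFin.symm]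

theorem sdist_comm (S : Finset (Fin d)) (x y : Pt d) : sdist S x y = sdist S y x := by
  simp only [sdist_eq_dist_subspaceProj, dist_comm]

end SubspaceDistance

section Outliers

variable {N d : ℕ}

/-- The outliers of `X` in the subspace `S`, whose number is `qCountS X k r S`. -/
def outliers (X : Fin N → Pt d) (k : ℕ) (r : ℝ) (S : Finset (Fin d)) : Finset (Fin N) :=
  {i | sdeg S X r i < k}

/-- The graph joining distinct records of `X` within subspace distance `r` of each other, in which
the degree of a record is its `sdeg`. -/
def nearGraph (S : Finset (Fin d)) (X : Fin N → Pt d) (r : ℝ) : SimpleGraph (Fin N) where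
  Adj i j := j ≠ i ∧ sdist S (X j) (X i) ≤ r
  symm := ⟨fun _ _ h => ⟨h.1.symm, sdist_comm S _ _ ▸ h.2⟩⟩
  loopless := ⟨fun _ h => h.1 rfl⟩

variable {k K : ℕ} {r : ℝ} {S : Finset (Fin d)}

theorem card_isIndepSet_nearGraph_le (hS : S.Nonempty) (hK : IsKissingNumber #S K)
    {X : Fin N → Pt d} {p : Pt d} {I : Finset (Fin N)} (hnear : ∀ i ∈ I, sdist S (X i) p ≤ r)
    (hI : (nearGraph S X r).IsIndepSet (I : Set (Fin N))) : #I ≤ K := by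
  refine hK.card_le_of_lt_dist hS.card_pos (f := fun i => subspaceProj S (X i))
    (p := subspaceProj S p) (r := r) (fun i hi => ?_) fun i hi j hj hij => ?_
  · exact (sdist_eq_dist_subspaceProj S (X i) p).symm.trans_le (hnear i hi)
  · have hfar : r < sdist S (X i) (X j) := not_le.1 fun h => hI hj hi hij.symm ⟨hij, h⟩
    exact hfar.trans_eq (sdist_eq_dist_subspaceProj S (X i) (X j))

theorem card_outliers_near_le (hS : S.Nonempty) (hK : IsKissingNumber #S K)
    (X : Fin N → Pt d) (p : Pt d) :
    #{j ∈ outliers X k r S | sdist S (X j) p ≤ r} ≤ k * K := by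
  obtain ⟨I, hIsub, hI, hcard⟩ := exists_isIndepSet_card_le_mul (nearGraph S X r)
    {j ∈ outliers X k r S | sdist S (X j) p ≤ r} fun a ha => by
      have hdeg : sdeg S X r a < k := by simpa [outliers] using (mem_filter.1 ha).1
      refine (card_le_card fun b hb => ?_).trans_lt hdeg
      exact mem_filter.2 ⟨mem_univ b, (mem_filter.1 hb).2⟩
  calc _ ≤ #I * k := hcard
    _ ≤ K * k := Nat.mul_le_mul_right k <|
      card_isIndepSet_nearGraph_le hS hK (fun i hi => (mem_filter.1 (hIsub hi)).2) hI
    _ = k * K := mul_comm K k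

theorem sdeg_le_sdeg_of_forall_lt_sdist {X X' : Fin N → Pt d} {j : Fin N} (hj : X j = X' j)
    (hfar : ∀ i, X i ≠ X' i → r < sdist S (X j) (X' i)) : sdeg S X' r j ≤ sdeg S X r j := by
  refine card_le_card fun l hl => ?_
  obtain ⟨hlj, hle⟩ := (mem_filter.1 hl).2
  rw [← hj, sdist_comm] at hle
  have hl' : X l = X' l := by
    by_contra hne
    exact hle.not_gt (hfar l hne)
  exact mem_filter.2 ⟨mem_univ l, hlj, by rwa [hl', sdist_comm]⟩

theorem outliers_subset_union_biUnion (X X' : Fin N → Pt d) :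
    outliers X k r S ⊆ outliers X' k r S ∪ ({i | X i ≠ X' i} : Finset (Fin N)).biUnion
      fun i => insert i {j ∈ outliers X k r S | sdist S (X j) (X' i) ≤ r} := by
  intro j hj
  rw [mem_union, or_iff_not_imp_right]
  intro hjfar
  simp only [mem_biUnion, mem_filter, mem_univ, true_and, mem_insert, hj, not_exists, not_and,
    not_or, not_le] at hjfar
  have hjeq : X j = X' j := by
    by_contra hne
    exact (hjfar j hne).1 rfl
  have hdeg : sdeg S X r j < k := by simpa [outliers] using hj
  simpa [outliers] using
    (sdeg_le_sdeg_of_forall_lt_sdist hjeq fun i hi => (hjfar i hi).2).trans_lt hdeg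

theorem qCountS_le_add_hamming_mul (hS : S.Nonempty) (hK : IsKissingNumber #S K)
    (X X' : Fin N → Pt d) :
    qCountS X k r S ≤ qCountS X' k r S + hamming X X' * (k * K + 1) :=
  calc qCountS X k r S
      ≤ qCountS X' k r S + _ :=
        (card_le_card (outliers_subset_union_biUnion X X')).trans (card_union_le _ _)
    _ ≤ qCountS X' k r S + hamming X X' * (k * K + 1) :=
        Nat.add_le_add_left (card_biUnion_le_card_mul _ _ _ fun i _ => (card_insert_le _ _).trans
          (Nat.add_le_add_right (card_outliers_near_le hS hK X (X' i)) 1)) _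

theorem qCountS_le_size (X : Fin N → Pt d) (k : ℕ) (r : ℝ) (S : Finset (Fin d)) :
    qCountS X k r S ≤ N :=
  card_finset_fin_le _

theorem qCountS_le_add_hamming_mul_min (hS : S.Nonempty) (hK : IsKissingNumber #S K)
    (X X' : Fin N → Pt d) :
    qCountS X k r S ≤ qCountS X' k r S + hamming X X' * min N (k * K + 1) := by
  have hkiss := qCountS_le_add_hamming_mul (k := k) (r := r) hS hK X X'
  obtain h₀ | hpos := (hamming X X').eq_zero_or_pos
  · simpa [h₀] using hkiss
  · have hsize : qCountS X k r S ≤ hamming X X' * N :=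
      (qCountS_le_size X k r S).trans (Nat.le_mul_of_pos_left N hpos)
    rw [mul_min, add_min]
    exact le_min (le_add_left hsize) hkiss

end Outliers

theorem hamming_comm {N d : ℕ} (X X' : Fin N → Pt d) : hamming X X' = hamming X' X := by
  simp only [hamming, ne_comm]

theorem uSubspace_sensitivity_le_one_general {N d k K : ℕ} {r : ℝ} {S : Finset (Fin d)}
    (hS : S.Nonempty) (hK : IsKissingNumber #S K) (X X' : Fin N → Pt d) :
    |uSubspace k r K X S - uSubspace k r K X' S| ≤ hamming X X' := by
  have hle := qCountS_le_add_hamming_mul_min (k := k) (r := r) hS hK X X'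
  have hge := qCountS_le_add_hamming_mul_min (k := k) (r := r) hS hK X' X
  rw [hamming_comm X' X] at hge
  rw [uSubspace, uSubspace, ← sub_div, abs_div, Nat.abs_cast]
  refine div_le_of_le_mul₀ (Nat.cast_nonneg _) (Nat.cast_nonneg _)
    (abs_sub_le_iff.2 ⟨sub_le_iff_le_add'.2 ?_, sub_le_iff_le_add'.2 ?_⟩)
  · exact_mod_cast hle
  · exact_mod_cast hge

/-- The utility function `u_subspace` has sensitivity at most `1`: for every nonempty
subspace `S` and every pair of neighboring databases, `|u(X,S) − u(X',S)| ≤ 1`. -/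
theorem uSubspace_sensitivity_le_one
    (d N k : ℕ) (hd : 1 ≤ d) (hk : 1 ≤ k) (r : ℝ) (hr : 0 < r)
    (K : ℕ → ℕ) (hK : ∀ c, 1 ≤ c → IsKissingNumber c (K c))
    (S : Finset (Fin d)) (hS : S.Nonempty)
    (X X' : Fin N → Pt d) (hH : hamming X X' = 1) :
    |uSubspace k r (K S.card) X S - uSubspace k r (K S.card) X' S| ≤ 1 := by
  simpa [hH] using uSubspace_sensitivity_le_one_general hS (hK #S hS.card_pos) X X'
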